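/- Let m and n be positive integers, let p_1, …, p_m ≥ 1 be real numbers with 1/p_1 + ⋯ + 1/p_m ≤ 1, and let s > 0 be a real number. Then there exists a nonzero continuous m-linear form A : ℓ_{p_1}^n × ⋯ × ℓ_{p_m}^n → 𝕂 with (∑_{j=1}^n |A(e_j, …, e_j)|^s)^{1/s} = n^{max{1/p_1 + ⋯ + 1/p_m + 1/s − 1, 0}} · ‖A‖. Consequently, the constant n^{max{1/p_1 + ⋯ + 1/p_m + 1/s − 1, 0}} in the estimate (∑_{j=1}^n |A(e_j, …, e_j)|^s)^{1/s} ≤ n^{max{1/p_1 + ⋯ + 1/p_m + 1/s − 1, 0}} · ‖A‖ is best possible when 1/p_1 + ⋯ + 1/p_m ≤ 1. -/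

import Mathlib

/-!
For a nonempty set `S` of indices, consider the diagonal form `A_S(x) = ∑_{j ∈ S} ∏ i, x i j`, and
write `σ = ∑ 1 / p i ≤ 1`.  Its norm is `|S| ^ (1 - σ)`:

* the upper bound is a Hölder inequality, obtained by summing over `j ∈ S` the weighted AM-GM
  inequality with weights `1 / p i` on the numbers `(|x i j| / ‖x i‖) ^ p i` and the remaining
  weight `1 - σ` on the constant `1 / |S|` (`sum_prod_le_card_rpow`);
* the lower bound comes from evaluating at the indicator of `S` in every variable.

On the other hand `A_S(e_j, …, e_j)` is `1` for `j ∈ S` and `0` otherwise, so the `ℓ_s` norm of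
the diagonal is `|S| ^ (1 / s)`.  The ratio is `|S| ^ (σ + 1 / s - 1)`; taking all indices for `S`
when this exponent is nonnegative and a single index otherwise gives the extremal form.
-/

/-- Hölder's inequality for finitely many normalized families, with exponents satisfying
`∑ 1 / p i ≤ 1`: the missing weight `1 - ∑ 1 / p i` turns into a power of the cardinality. -/
lemma sum_prod_le_card_rpow {m : ℕ} {ι : Type*} (S : Finset ι) (hS : S.Nonempty)
    (p : Fin m → ℝ) (hp : ∀ i, 1 ≤ p i) (hsum : ∑ i, 1 / p i ≤ 1)
    (z : Fin m → ι → ℝ) (hz : ∀ i j, 0 ≤ z i j) (hz1 : ∀ i, ∑ j ∈ S, z i j ^ p i ≤ 1) :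
    ∑ j ∈ S, ∏ i, z i j ≤ (S.card : ℝ) ^ (1 - ∑ i, 1 / p i) := by
  have hk : (0 : ℝ) < S.card := by exact_mod_cast hS.card_pos
  set σ := ∑ i, 1 / p i with hσ
  have hp0 : ∀ i, 0 < p i := fun i => lt_of_lt_of_le one_pos (hp i)
  have key : ∀ j ∈ S, ((S.card : ℝ)⁻¹) ^ (1 - σ) * ∏ i, z i j
      ≤ (1 - σ) * (S.card : ℝ)⁻¹ + ∑ i, 1 / p i * z i j ^ p i := by
    intro j _
    -- `none` carries the remaining weight `1 - σ`
    have h := Real.geom_mean_le_arith_mean_weighted (Finset.univ : Finset (Option (Fin m)))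
      (fun o => o.elim (1 - σ) (fun i => 1 / p i))
      (fun o => o.elim ((S.card : ℝ)⁻¹) (fun i => z i j ^ p i))
      (by
        rintro (_ | i) _
        · simpa using hsum
        · simpa using (hp0 i).le)
      (by simp [Fintype.sum_option, hσ])
      (by
        rintro (_ | i) _
        · simp
        · simpa using Real.rpow_nonneg (hz i j) _)
    simp only [Fintype.prod_option, Fintype.sum_option, Option.elim_none, Option.elim_some] at h
    refine le_trans (le_of_eq ?_) h
    congr 1
    refine Finset.prod_congr rfl fun i _ => ?_
    rw [← Real.rpow_mul (hz i j), mul_one_div_cancel (hp0 i).ne', Real.rpow_one]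
  have h2 : ((S.card : ℝ)⁻¹) ^ (1 - σ) * ∑ j ∈ S, ∏ i, z i j ≤ 1 := by
    rw [Finset.mul_sum]
    refine (Finset.sum_le_sum key).trans ?_
    rw [Finset.sum_add_distrib, Finset.sum_const, Finset.sum_comm, nsmul_eq_mul]
    have h3 : ∑ i, ∑ j ∈ S, 1 / p i * z i j ^ p i ≤ σ := by
      refine Finset.sum_le_sum fun i _ => ?_
      rw [← Finset.mul_sum]
      exact mul_le_of_le_one_right (one_div_pos.2 (hp0 i)).le (hz1 i)
    have h4 : (S.card : ℝ) * ((1 - σ) * (S.card : ℝ)⁻¹) = 1 - σ := by field_simp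
    linarith
  rw [Real.inv_rpow hk.le, inv_mul_le_iff₀ (Real.rpow_pos_of_pos hk _), mul_one] at h2
  exact h2

/-- The diagonal form `x ↦ ∑_{j ∈ S} ∏ i, x i j` on `ℓ_{p_1}^n × ⋯ × ℓ_{p_m}^n`. -/
noncomputable def diagForm (𝕂 : Type*) [RCLike 𝕂] {m n : ℕ} (p : Fin m → ℝ)
    [∀ i, Fact (1 ≤ ENNReal.ofReal (p i))] (S : Finset (Fin n)) :
    ContinuousMultilinearMap 𝕂
        (fun i : Fin m => PiLp (ENNReal.ofReal (p i)) (fun _ : Fin n => 𝕂)) 𝕂 :=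
  ∑ j ∈ S, (ContinuousMultilinearMap.mkPiAlgebra 𝕂 (Fin m) 𝕂).compContinuousLinearMap
    (fun i => PiLp.proj (ENNReal.ofReal (p i)) (fun _ : Fin n => 𝕂) j)

lemma diagForm_apply {𝕂 : Type*} [RCLike 𝕂] {m n : ℕ} (p : Fin m → ℝ)
    [∀ i, Fact (1 ≤ ENNReal.ofReal (p i))] (S : Finset (Fin n))
    (x : ∀ i : Fin m, PiLp (ENNReal.ofReal (p i)) (fun _ : Fin n => 𝕂)) :
    diagForm 𝕂 p S x = ∑ j ∈ S, ∏ i, x i j := by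
  simp [diagForm]

lemma norm_diagForm {𝕂 : Type*} [RCLike 𝕂] {m n : ℕ} (p : Fin m → ℝ)
    (hp : ∀ i, 1 ≤ p i) [∀ i, Fact (1 ≤ ENNReal.ofReal (p i))]
    (hsum : ∑ i : Fin m, 1 / p i ≤ 1) (S : Finset (Fin n)) (hS : S.Nonempty) :
    ‖diagForm 𝕂 p S‖ = (S.card : ℝ) ^ (1 - ∑ i, 1 / p i) := by
  have hk : (0 : ℝ) < S.card := by exact_mod_cast hS.card_pos
  have hp0 : ∀ i, 0 < p i := fun i => lt_of_lt_of_le one_pos (hp i)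
  have hT : ∀ i, (ENNReal.ofReal (p i)).toReal = p i := fun i => ENNReal.toReal_ofReal (hp0 i).le
  have hnorm : ∀ (i : Fin m) (x : PiLp (ENNReal.ofReal (p i)) (fun _ : Fin n => 𝕂)),
      ‖x‖ = (∑ j, ‖x j‖ ^ p i) ^ (1 / p i) := by
    intro i x
    rw [PiLp.norm_eq_sum (by rw [hT]; exact hp0 i), hT]
  apply le_antisymm
  · refine ContinuousMultilinearMap.opNorm_le_bound (by positivity) fun x => ?_
    rw [diagForm_apply]
    by_cases hx : ∃ i, x i = 0
    · obtain ⟨i, hi⟩ := hx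
      have : ∑ j ∈ S, ∏ i, x i j = 0 :=
        Finset.sum_eq_zero fun j _ => Finset.prod_eq_zero (Finset.mem_univ i) (by simp [hi])
      rw [this, norm_zero]
      positivity
    push Not at hx
    have hx0 : ∀ i, 0 < ‖x i‖ := fun i => norm_pos_iff.2 (hx i)
    have h := sum_prod_le_card_rpow S hS p hp hsum (fun i j => ‖x i j‖ / ‖x i‖)
      (fun i j => by positivity) (by
        intro i
        have h1 : ∑ j, ‖x i j‖ ^ p i = ‖x i‖ ^ p i := by
          rw [hnorm i (x i), ← Real.rpow_mul (by positivity), one_div_mul_cancel (hp0 i).ne',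
            Real.rpow_one]
        simp only [Real.div_rpow (norm_nonneg _) (norm_nonneg _)]
        rw [← Finset.sum_div, div_le_one (Real.rpow_pos_of_pos (hx0 i) _), ← h1]
        exact Finset.sum_le_sum_of_subset_of_nonneg (Finset.subset_univ S)
          fun _ _ _ => by positivity)
    simp only [Finset.prod_div_distrib] at h
    rw [← Finset.sum_div, div_le_iff₀ (Finset.prod_pos fun i _ => hx0 i)] at h
    refine (norm_sum_le _ _).trans ?_
    simpa only [norm_prod] using h
  · have hv := (diagForm 𝕂 p S).le_opNorm
      (fun i => WithLp.toLp (ENNReal.ofReal (p i)) (fun j => if j ∈ S then (1 : 𝕂) else 0))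
    have hv1 : ∀ i, ‖WithLp.toLp (ENNReal.ofReal (p i))
        (fun j => if j ∈ S then (1 : 𝕂) else 0)‖ = (S.card : ℝ) ^ (1 / p i) := by
      intro i
      rw [hnorm]
      congr 1
      have : ∀ j, ‖(if j ∈ S then (1 : 𝕂) else 0)‖ ^ p i = if j ∈ S then (1 : ℝ) else 0 := by
        intro j
        split_ifs
        · simp
        · simp [(hp0 i).ne']
      simp [this]
    have hS1 : ∑ j ∈ S, ∏ _i : Fin m, (if j ∈ S then (1 : 𝕂) else 0) = S.card := by
      rw [Finset.sum_congr rfl (g := fun _ => (1 : 𝕂)) fun j hj => by simp [hj]]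
      simp
    rw [diagForm_apply] at hv
    simp only [hv1, hS1, RCLike.norm_natCast] at hv
    rw [← Real.rpow_sum_of_pos hk] at hv
    rw [Real.rpow_sub hk, Real.rpow_one, div_le_iff₀ (Real.rpow_pos_of_pos hk _)]
    exact hv

/-- For positive integers `m, n`, reals `p_1,…,p_m ≥ 1` with
`1/p_1 + ⋯ + 1/p_m ≤ 1`, and `s > 0`, there exists a nonzero continuous `m`-linear form
`A : ℓ_{p_1}^n × ⋯ × ℓ_{p_m}^n → 𝕂` with
`(∑_{j=1}^n |A(e_j,…,e_j)|^s)^{1/s} = n^{max{1/p_1 + ⋯ + 1/p_m + 1/s − 1, 0}} · ‖A‖`,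
so this constant is best possible. -/
theorem stmt_11 {𝕂 : Type*} [RCLike 𝕂] (m n : ℕ) (hm : 0 < m) (hn : 0 < n)
    (p : Fin m → ℝ) (hp : ∀ i, 1 ≤ p i) [∀ i, Fact (1 ≤ ENNReal.ofReal (p i))]
    (hsum : ∑ i : Fin m, 1 / p i ≤ 1)
    (s : ℝ) (hs : 0 < s) :
    ∃ A : ContinuousMultilinearMap 𝕂
        (fun i : Fin m => PiLp (ENNReal.ofReal (p i)) (fun _ : Fin n => 𝕂)) 𝕂,
      A ≠ 0 ∧
      (∑ j : Fin n,
          ‖A (fun i => (WithLp.equiv (ENNReal.ofReal (p i)) (Fin n → 𝕂)).symm (Pi.single j 1))‖ ^ s)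
          ^ (1 / s)
        = (n : ℝ) ^ max (∑ i : Fin m, 1 / p i + 1 / s - 1) 0 * ‖A‖ := by
  -- it suffices to find `S` whose cardinality satisfies the resulting numerical identity
  suffices H : ∃ S : Finset (Fin n), S.Nonempty ∧ (S.card : ℝ) ^ (1 / s)
      = (n : ℝ) ^ max (∑ i : Fin m, 1 / p i + 1 / s - 1) 0
        * (S.card : ℝ) ^ (1 - ∑ i, 1 / p i) by
    obtain ⟨S, hS, hcard⟩ := H
    have hk : (0 : ℝ) < S.card := by exact_mod_cast hS.card_pos
    have hA := norm_diagForm (𝕂 := 𝕂) p hp hsum S hS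
    refine ⟨diagForm 𝕂 p S, ?_, ?_⟩
    · rw [← norm_pos_iff, hA]
      positivity
    · rw [hA, ← hcard]
      congr 1
      have hval : ∀ j : Fin n, ‖diagForm 𝕂 p S (fun i =>
          (WithLp.equiv (ENNReal.ofReal (p i)) (Fin n → 𝕂)).symm (Pi.single j 1))‖ ^ s
          = if j ∈ S then (1 : ℝ) else 0 := by
        intro j
        rw [diagForm_apply]
        -- `m > 0` is what makes the off-diagonal products vanish
        have hprod : ∀ l : Fin n, ∏ i : Fin m,
            ((WithLp.equiv (ENNReal.ofReal (p i)) (Fin n → 𝕂)).symm (Pi.single j 1)) l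
            = if l = j then (1 : 𝕂) else 0 := by
          intro l
          simp [hm.ne']
        simp only [hprod, Finset.sum_ite_eq']
        split_ifs
        · simp
        · simp [hs.ne']
      rw [Finset.sum_congr rfl fun j _ => hval j]
      simp
  have hn' : (0 : ℝ) < n := by exact_mod_cast hn
  rcases le_total 0 (∑ i : Fin m, 1 / p i + 1 / s - 1) with h | h
  · refine ⟨Finset.univ, ⟨⟨0, hn⟩, Finset.mem_univ _⟩, ?_⟩
    rw [max_eq_left h, Finset.card_univ, Fintype.card_fin, ← Real.rpow_add hn']
    congr 1
    ring
  · refine ⟨{⟨0, hn⟩}, Finset.singleton_nonempty _, ?_⟩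
    rw [max_eq_right h]
    simp
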